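/- Let q be a prime, let a be an integer with 0 < a < q, let s ∈ ℂ, and let x > 0 be real. Then ∑_{n=1}^∞ F(x/n)·sin(2πna/q)·n^s = −i·q^s ∑_{d ∣ q, d > 1} (1/(d^s·φ(d))) ∑_{χ mod d, χ odd} χ(a)·τ(conj(χ)) · ∑′_{1 ≤ n ≤ dx/q} σ_s(χ, n), where the outer sum runs over the divisors d > 1 of q, the middle sum runs over the odd Dirichlet characters χ modulo d, and conj(χ) denotes the complex conjugate character. (The left-hand side is a finite sum since F(x/n) = 0 for n > x.) -/

import Mathlib

open Complex Finset
open scoped Real BigOperators Classical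

/-- `F(x) = ⌊x⌋` for non-integral `x`, and `F(x) = x - 1/2` for integral `x`. -/
noncomputable def Ffn (x : ℝ) : ℝ := if ∃ m : ℤ, x = (m : ℝ) then x - 1 / 2 else (⌊x⌋ : ℝ)

/-- Twisted divisor sum `σ_s(χ, n) = ∑_{ℓ ∣ n} χ(ℓ) ℓ^s`. -/
noncomputable def sigmaChi {d : ℕ} (χ : DirichletCharacter ℂ d) (s : ℂ) (n : ℕ) : ℂ :=
  ∑ ℓ ∈ n.divisors, χ (ℓ : ZMod d) * (ℓ : ℂ) ^ s

/-- The Gauss sum `τ(conj χ) = ∑_{r mod d} conj(χ(r)) e^{2πir/d}` (zero for modulus `0`). -/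
noncomputable def tauConj : (d : ℕ) → DirichletCharacter ℂ d → ℂ
  | 0, _ => 0
  | (m + 1), χ => ∑ r : ZMod (m + 1),
      (starRingEnd ℂ) (χ r) * Complex.exp (2 * (π : ℂ) * Complex.I * (r.val : ℂ) / ((m : ℂ) + 1))

/-- The primed sum `∑′_{1 ≤ n ≤ y} f(n)`: the term at an integral endpoint is halved. -/
noncomputable def psum (y : ℝ) (f : ℕ → ℂ) : ℂ :=
  (∑ n ∈ Finset.Icc 1 ⌊y⌋₊, f n) -
    (if y = (⌊y⌋₊ : ℝ) ∧ 1 ≤ ⌊y⌋₊ then f ⌊y⌋₊ / 2 else 0)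


lemma aux_double (N : ℕ) (g : ℕ → ℂ) :
    ∑ n ∈ Finset.Icc 1 N, ∑ l ∈ n.divisors, g l
      = ∑ l ∈ Finset.Icc 1 N, ((N / l : ℕ) : ℂ) * g l := by
  rw [Finset.sum_comm' (t' := Finset.Icc 1 N)
    (s' := fun l => (Finset.Ioc 0 N).filter (fun n => l ∣ n))]
  · refine Finset.sum_congr rfl fun l _ => ?_
    rw [Finset.sum_const, nsmul_eq_mul]
    congr 2
    convert Nat.Ioc_filter_dvd_card_eq_div N l
  · intro n l
    simp only [Finset.mem_Icc, Nat.mem_divisors, Finset.mem_filter, Finset.mem_Ioc]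
    constructor
    · rintro ⟨⟨h1, h2⟩, h3, h4⟩
      have := Nat.le_of_dvd h1 h3
      have := Nat.pos_of_dvd_of_pos h3 h1
      exact ⟨⟨⟨by omega, h2⟩, h3⟩, by omega, by omega⟩
    · rintro ⟨⟨⟨h1, h2⟩, h3⟩, h4, h5⟩
      exact ⟨⟨h1, h2⟩, h3, by omega⟩

lemma aux_F (x : ℝ) (hx : 0 < x) (n : ℕ) (hn : 1 ≤ n) :
    Ffn (x / n) = ((⌊x⌋₊ / n : ℕ) : ℝ)
      - (if x = (⌊x⌋₊ : ℝ) ∧ n ∣ ⌊x⌋₊ then 1 / 2 else 0) := by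
  have hn0 : (0 : ℝ) < n := by exact_mod_cast hn
  have hfl : (⌊x / n⌋ : ℝ) = ((⌊x⌋₊ / n : ℕ) : ℝ) := by
    rw [← Nat.floor_div_natCast, natCast_floor_eq_intCast_floor (by positivity)]
  unfold Ffn
  by_cases h : ∃ m : ℤ, x / n = (m : ℝ)
  · rw [if_pos h]
    obtain ⟨m, hm⟩ := h
    have hm0 : 0 < m := by
      have : (0 : ℝ) < m := by rw [← hm]; positivity
      exact_mod_cast this
    lift m to ℕ using hm0.le
    have hxm : x = ((n * m : ℕ) : ℝ) := by
      rw [div_eq_iff hn0.ne'] at hm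
      rw [hm]; push_cast; ring
    have hf : ⌊x⌋₊ = n * m := by rw [hxm, Nat.floor_natCast]
    rw [if_pos ⟨by rw [hf]; exact hxm, hf ▸ dvd_mul_right n m⟩, hf,
      Nat.mul_div_cancel_left _ hn, hm]
    simp
  · rw [if_neg h, if_neg, hfl, sub_zero]
    rintro ⟨h1, k, hk⟩
    apply h
    refine ⟨k, ?_⟩
    rw [h1, hk]
    push_cast
    field_simp

lemma aux_A (x : ℝ) (hx : 0 < x) (g : ℕ → ℂ) :
    ∑' n : ℕ, ((Ffn (x / ((n : ℝ) + 1)) : ℝ) : ℂ) * g (n + 1)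
      = psum x (fun n => ∑ l ∈ n.divisors, g l) := by
  rw [tsum_eq_sum (s := Finset.range ⌊x⌋₊)]
  · have h1 : ∑ n ∈ Finset.range ⌊x⌋₊, ((Ffn (x / ((n : ℝ) + 1)) : ℝ) : ℂ) * g (n + 1)
        = ∑ n ∈ Finset.Icc 1 ⌊x⌋₊, ((Ffn (x / (n : ℝ)) : ℝ) : ℂ) * g n := by
      rw [Finset.range_eq_Ico, ← Finset.Ico_add_one_right_eq_Icc]
      have := Finset.sum_Ico_add' (fun n : ℕ => ((Ffn (x / (n : ℝ)) : ℝ) : ℂ) * g n) 0 ⌊x⌋₊ 1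
      simpa using this
    rw [h1, psum, aux_double]
    have h2 : ∀ n ∈ Finset.Icc 1 ⌊x⌋₊, ((Ffn (x / (n : ℝ)) : ℝ) : ℂ) * g n
        = ((⌊x⌋₊ / n : ℕ) : ℂ) * g n
          - (if x = (⌊x⌋₊ : ℝ) ∧ n ∣ ⌊x⌋₊ then g n / 2 else 0) := by
      intro n hn
      rw [aux_F x hx n (Finset.mem_Icc.1 hn).1]
      split_ifs <;> push_cast <;> ring
    rw [Finset.sum_congr rfl h2, Finset.sum_sub_distrib]
    congr 1
    by_cases hxi : x = (⌊x⌋₊ : ℝ)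
    · have hN : 1 ≤ ⌊x⌋₊ := by
        rw [hxi] at hx
        exact_mod_cast hx
      rw [if_pos ⟨hxi, hN⟩, Finset.sum_div]
      simp only [← hxi, true_and]
      rw [← Finset.sum_filter]
      refine Finset.sum_congr ?_ fun _ _ => rfl
      ext l
      simp only [Finset.mem_filter, Finset.mem_Icc, Nat.mem_divisors]
      constructor
      · rintro ⟨_, h⟩; exact ⟨h, by omega⟩
      · rintro ⟨h, _⟩
        exact ⟨⟨Nat.pos_of_dvd_of_pos h hN, Nat.le_of_dvd hN h⟩, h⟩
    · simp [hxi]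
  · intro n hn
    have hn' : ⌊x⌋₊ < n + 1 := by simpa [Nat.lt_succ_iff] using hn
    have h := aux_F x hx (n + 1) (by omega)
    have hnd : ¬ (x = (⌊x⌋₊ : ℝ) ∧ n + 1 ∣ ⌊x⌋₊) := by
      rintro ⟨h1, h2⟩
      have : 0 < ⌊x⌋₊ := by
        rw [h1] at hx
        exact_mod_cast hx
      have := Nat.le_of_dvd this h2
      omega
    rw [if_neg hnd, Nat.div_eq_of_lt hn'] at h
    push_cast at h
    rw [h]; simp

lemma aux_tau (q : ℕ) [NeZero q] (χ : DirichletCharacter ℂ q) :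
    tauConj q χ = ∑ r : ZMod q, χ⁻¹ r * ZMod.stdAddChar r := by
  cases q with
  | zero => exact absurd rfl (NeZero.ne 0)
  | succ m =>
    unfold tauConj
    refine Finset.sum_congr rfl fun r _ => ?_
    rw [← MulChar.star_apply', ZMod.stdAddChar_apply, ZMod.toCircle_apply]
    push_cast
    rfl

lemma aux_orth (q : ℕ) [NeZero q] (m : ZMod q) (hm : IsUnit m) :
    ∑ χ : DirichletCharacter ℂ q, χ m * tauConj q χ
      = (q.totient : ℂ) * ZMod.stdAddChar m := by
  simp only [aux_tau, Finset.mul_sum]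
  rw [Finset.sum_comm]
  have key : ∀ r : ZMod q, ∑ χ : DirichletCharacter ℂ q, χ m * (χ⁻¹ r * ZMod.stdAddChar r)
      = if m = r then (q.totient : ℂ) * ZMod.stdAddChar r else 0 := by
    intro r
    have h := DirichletCharacter.sum_char_inv_mul_char_eq ℂ hm r
    rw [← Equiv.sum_comp (Equiv.inv (DirichletCharacter ℂ q))] at h
    have h3 : ∀ χ : DirichletCharacter ℂ q, χ⁻¹ m⁻¹ = χ m := by
      intro χ
      rw [MulChar.inv_apply]
      congr 1
      obtain ⟨u, rfl⟩ := hm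
      rw [ZMod.inv_coe_unit, Ring.inverse_unit, inv_inv]
    simp only [Equiv.inv_apply, h3] at h
    simp only [← mul_assoc]
    rw [← Finset.sum_mul, h]
    split_ifs <;> simp
  rw [Finset.sum_congr rfl fun r _ => key r]
  simp

lemma aux_B (q : ℕ) [NeZero q] (m : ℕ) (hm : IsUnit (m : ZMod q)) :
    ∑ χ : DirichletCharacter ℂ q, (if χ.Odd then χ (m : ZMod q) * tauConj q χ else 0)
      = (q.totient : ℂ) * Complex.I * ((Real.sin (2 * π * m / q) : ℝ) : ℂ) := by
  have h1 : ∀ χ : DirichletCharacter ℂ q,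
      (if χ.Odd then χ (m : ZMod q) * tauConj q χ else 0)
      = (χ (m : ZMod q) * tauConj q χ - χ (-(m : ZMod q)) * tauConj q χ) / 2 := by
    intro χ
    rcases χ.even_or_odd with h | h
    · rw [if_neg, h.eval_neg]
      · ring
      · intro h'
        have := h.symm.trans h'
        norm_num at this
    · rw [if_pos h, h.eval_neg]
      ring
  rw [Finset.sum_congr rfl fun χ _ => h1 χ, ← Finset.sum_div, Finset.sum_sub_distrib,
    aux_orth q _ hm, aux_orth q _ hm.neg]
  have e1 := ZMod.stdAddChar_coe (N := q) (m : ℤ)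
  have e2 := ZMod.stdAddChar_coe (N := q) (-(m : ℤ))
  push_cast at e1 e2
  rw [e1, e2]
  push_cast
  have t1 : 2 * (π : ℂ) * I * m / q = (2 * π * m / q) * I := by ring
  have t2 : 2 * (π : ℂ) * I * (-m) / q = -(2 * π * m / q) * I := by ring
  rw [t1, t2, Complex.sin]
  linear_combination -(q.totient : ℂ) / 2 *
    (cexp (-(2 * π * m / q) * I) - cexp ((2 * π * m / q) * I)) * Complex.I_sq

lemma aux_C (q : ℕ) (hq : q.Prime) (a : ℕ) (ha0 : 0 < a) (haq : a < q) [NeZero q] (n : ℕ) :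
    ∑ χ : DirichletCharacter ℂ q,
        (if χ.Odd then χ (a : ZMod q) * tauConj q χ * χ (n : ZMod q) else 0)
      = (q.totient : ℂ) * Complex.I * ((Real.sin (2 * π * n * a / q) : ℝ) : ℂ) := by
  by_cases hn : q ∣ n
  · have h0 : (n : ZMod q) = 0 := (ZMod.natCast_eq_zero_iff n q).2 hn
    have : Fact q.Prime := ⟨hq⟩
    obtain ⟨k, rfl⟩ := hn
    have hs : Real.sin (2 * π * ((q * k : ℕ) : ℝ) * a / q) = 0 := by
      rw [Real.sin_eq_zero_iff]
      refine ⟨2 * k * a, ?_⟩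
      have : (q : ℝ) ≠ 0 := by exact_mod_cast hq.ne_zero
      push_cast
      field_simp
    rw [hs, h0]
    have hz : ∀ χ : DirichletCharacter ℂ q, χ (0 : ZMod q) = 0 :=
      fun χ => MulChar.map_zero χ
    simp [hz]
  · have hu : IsUnit ((n * a : ℕ) : ZMod q) := by
      rw [ZMod.isUnit_iff_coprime]
      refine Nat.Coprime.mul_left ?_ ?_
      · exact ((hq.coprime_iff_not_dvd).2 hn).symm
      · exact ((hq.coprime_iff_not_dvd).2 (Nat.not_dvd_of_pos_of_lt ha0 haq)).symm
    have h := aux_B q (n * a) hu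
    rw [show 2 * π * n * a / q = 2 * π * ((n * a : ℕ) : ℝ) / q by push_cast; ring, ← h]
    refine Finset.sum_congr rfl fun χ _ => ?_
    push_cast
    rw [map_mul]
    split_ifs
    · ring
    · rfl

lemma psum_mul (y : ℝ) (c : ℂ) (f : ℕ → ℂ) : c * psum y f = psum y (fun n => c * f n) := by
  unfold psum
  rw [mul_sub, Finset.mul_sum]
  split_ifs <;> ring

lemma psum_sum {ι : Type*} (t : Finset ι) (y : ℝ) (f : ι → ℕ → ℂ) :
    ∑ i ∈ t, psum y (f i) = psum y (fun n => ∑ i ∈ t, f i n) := by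
  unfold psum
  rw [Finset.sum_sub_distrib, Finset.sum_comm]
  split_ifs
  · rw [Finset.sum_div]
  · simp

theorem odd_character_divisor_identity
    (q : ℕ) (hq : q.Prime) (a : ℕ) (ha0 : 0 < a) (haq : a < q)
    (s : ℂ) (x : ℝ) (hx : 0 < x) :
    (∑' n : ℕ, ((Ffn (x / ((n : ℝ) + 1)) : ℝ) : ℂ) *
        ((Real.sin (2 * π * ((n : ℝ) + 1) * a / q) : ℝ) : ℂ) * ((n : ℂ) + 1) ^ s)
    = -Complex.I * (q : ℂ) ^ s *
        ∑ d ∈ q.divisors.filter (fun d => 1 < d),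
          ((d : ℂ) ^ s * (Nat.totient d : ℂ))⁻¹ *
            ∑' χ : DirichletCharacter ℂ d,
              if χ.Odd then
                χ (a : ZMod d) * tauConj d χ *
                  psum (d * x / q) (fun n => sigmaChi χ s n)
              else 0 := by
  have hq0 : (q : ℂ) ≠ 0 := by exact_mod_cast hq.ne_zero
  have hqR : (q : ℝ) ≠ 0 := by exact_mod_cast hq.ne_zero
  have hqs : (q : ℂ) ^ s ≠ 0 := by simp [Complex.cpow_eq_zero_iff, hq0]
  have hne : NeZero q := ⟨hq.ne_zero⟩
  have hphi : (q.totient : ℂ) ≠ 0 := by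
    exact_mod_cast (Nat.totient_pos.2 hq.pos).ne'
  have hfil : q.divisors.filter (fun d => 1 < d) = {q} := by
    ext d
    simp only [Finset.mem_filter, Nat.mem_divisors, Finset.mem_singleton]
    constructor
    · rintro ⟨⟨h, _⟩, h1⟩
      rcases (Nat.dvd_prime hq).1 h with h2 | h2
      · omega
      · exact h2
    · rintro rfl
      exact ⟨⟨dvd_rfl, hq.ne_zero⟩, hq.one_lt⟩
  rw [hfil, Finset.sum_singleton, mul_div_cancel_left₀ x hqR]
  have hL := aux_A x hx
    (fun n => ((Real.sin (2 * π * (n : ℝ) * a / q) : ℝ) : ℂ) * (n : ℂ) ^ s)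
  simp only [Nat.cast_add, Nat.cast_one] at hL
  simp only [← mul_assoc] at hL
  rw [hL, tsum_fintype]
  have hR : ∀ χ : DirichletCharacter ℂ q,
      (if χ.Odd then χ (a : ZMod q) * tauConj q χ * psum x (fun n => sigmaChi χ s n) else 0)
      = psum x (fun n => ∑ l ∈ n.divisors,
        (if χ.Odd then χ (a : ZMod q) * tauConj q χ * χ (l : ZMod q) else 0) * (l : ℂ) ^ s) := by
    intro χ
    split_ifs
    · rw [psum_mul]
      simp only [sigmaChi, Finset.mul_sum, mul_assoc]
    · simp [psum]
  rw [Finset.sum_congr rfl fun χ _ => hR χ, psum_sum]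
  have hS : ∀ n : ℕ, ∑ χ : DirichletCharacter ℂ q, ∑ l ∈ n.divisors,
        (if χ.Odd then χ (a : ZMod q) * tauConj q χ * χ (l : ZMod q) else 0) * (l : ℂ) ^ s
      = ∑ l ∈ n.divisors, (q.totient : ℂ) * Complex.I *
        ((Real.sin (2 * π * l * a / q) : ℝ) : ℂ) * (l : ℂ) ^ s := by
    intro n
    rw [Finset.sum_comm]
    refine Finset.sum_congr rfl fun l _ => ?_
    rw [← Finset.sum_mul, aux_C q hq a ha0 haq]
  simp only [hS]
  rw [← mul_assoc, psum_mul]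
  congr 1
  funext n
  rw [Finset.mul_sum]
  refine Finset.sum_congr rfl fun l _ => ?_
  field_simp
  rw [Complex.I_sq]
  ring
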